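/- Let n be a positive integer with n ≡ 1 (mod 6) and n ≠ 7. Then there exists a Steiner triple system of order n with the property that for every point x there is an almost parallel class that does not contain x. -/

import Mathlib

/-- `B` is (the block set of) a partial Steiner triple system on the point set `X`:
every block has 3 points and every pair of distinct points lies in at most one block. -/
def isPSTS {X : Type*} [DecidableEq X] (B : Finset (Finset X)) : Prop :=
  (∀ b ∈ B, b.card = 3) ∧
  ∀ p q : X, p ≠ q → (B.filter (fun b => p ∈ b ∧ q ∈ b)).card ≤ 1

/-- `B` is (the block set of) a Steiner triple system on the point set `X`:
every block has 3 points and every pair of distinct points lies in exactly one block. -/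
def isSTS {X : Type*} [DecidableEq X] (B : Finset (Finset X)) : Prop :=
  (∀ b ∈ B, b.card = 3) ∧
  ∀ p q : X, p ≠ q → (B.filter (fun b => p ∈ b ∧ q ∈ b)).card = 1

/-- The finset `S` can be partitioned into blocks of `B`. -/
def blocksPartition {X : Type*} [DecidableEq X] (B : Finset (Finset X)) (S : Finset X) : Prop :=
  ∃ P : Finset (Finset X), P ⊆ B ∧
    (∀ b₁ ∈ P, ∀ b₂ ∈ P, b₁ ≠ b₂ → Disjoint b₁ b₂) ∧ P.biUnion id = S

/-- `A` is an almost parallel class of `B`: a set of pairwise disjoint blocks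
covering all points of `X` except exactly one. -/
def isAPC {X : Type*} [DecidableEq X] [Fintype X] (B A : Finset (Finset X)) : Prop :=
  A ⊆ B ∧ (∀ b₁ ∈ A, ∀ b₂ ∈ A, b₁ ≠ b₂ → Disjoint b₁ b₂) ∧
    ∃ y : X, A.biUnion id = Finset.univ.erase y

/-- `B` is sequenceable: there is a sequencing of the points (a bijection from
`Fin n` to `X`) such that no proper segment can be partitioned into blocks of `B`. -/
def sequenceable {X : Type*} [DecidableEq X] [Fintype X] (B : Finset (Finset X)) : Prop :=
  ∃ f : Fin (Fintype.card X) ≃ X,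
    ∀ i j : Fin (Fintype.card X), i ≤ j →
      ¬((i : ℕ) = 0 ∧ (j : ℕ) = Fintype.card X - 1) →
      ¬ blocksPartition B ((Finset.Icc i j).image f)

/-- `T` is the (symmetric) block relation of a Steiner triple system on `X`. -/
structure STSRel {X : Type*} (T : X → X → X → Prop) : Prop where
  s1 : ∀ x y z, T x y z → T y x z
  s2 : ∀ x y z, T x y z → T x z y
  ne : ∀ x y z, T x y z → x ≠ y
  ex : ∀ x y, x ≠ y → ∃ z, T x y z
  un : ∀ x y z w, T x y z → T x y w → z = w

/-- There is an STS on `X` all of whose points are missed by an almost parallel class,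
the class being given by a permutation of order three. -/
def HasP (X : Type*) : Prop :=
  ∃ T : X → X → X → Prop, STSRel T ∧ ∀ p : X, ∃ s : X → X, s p = p ∧
    ∀ x, x ≠ p → T x (s x) (s (s x)) ∧ s (s (s x)) = x

theorem HasP.congr {X Y : Type*} (e : X ≃ Y) (h : HasP X) : HasP Y := by
  obtain ⟨T, hT, hs⟩ := h
  refine ⟨fun a b c => T (e.symm a) (e.symm b) (e.symm c),
    ⟨fun _ _ _ h => hT.s1 _ _ _ h, fun _ _ _ h => hT.s2 _ _ _ h, ?_, ?_, ?_⟩, ?_⟩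
  · rintro x y z h rfl
    exact hT.ne _ _ _ h rfl
  · intro x y h
    obtain ⟨z, hz⟩ := hT.ex (e.symm x) (e.symm y) (by simpa using h)
    exact ⟨e z, by simpa using hz⟩
  · intro x y z w h1 h2
    exact e.symm.injective (hT.un _ _ _ _ h1 h2)
  · intro p
    obtain ⟨s, h1, h2⟩ := hs (e.symm p)
    refine ⟨fun x => e (s (e.symm x)), by simp [h1], fun x hx => ?_⟩
    have := h2 (e.symm x) (by simpa using hx)
    simpa [Equiv.symm_apply_eq, ← Equiv.eq_symm_apply] using this

theorem HasP.ofGroup {G : Type*} [AddCommGroup G] (f s : G → G)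
    (hf : ∀ d, d ≠ 0 → f d ≠ 0 ∧ f (f d) = d ∧ f (-d) = f d - d)
    (hs0 : s 0 = 0)
    (hs : ∀ x, x ≠ 0 → s x ≠ x ∧ s (s x) - x = f (s x - x) ∧ s (s (s x)) = x) : HasP G := by
  refine ⟨fun x y z => x ≠ y ∧ z - x = f (y - x), ⟨?_, ?_, ?_, ?_, ?_⟩, ?_⟩
  · rintro x y z ⟨h, e⟩
    refine ⟨h.symm, ?_⟩
    have := (hf (y - x) (sub_ne_zero.2 h.symm)).2.2
    rw [neg_sub] at this
    rw [this, ← e]; abel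
  · rintro x y z ⟨h, e⟩
    have := hf (y - x) (sub_ne_zero.2 h.symm)
    rw [← e] at this
    exact ⟨(sub_ne_zero.1 this.1).symm, this.2.1.symm⟩
  · rintro x y z h
    exact h.1
  · intro x y h
    exact ⟨f (y - x) + x, h, by abel⟩
  · rintro x y z w ⟨_, h1⟩ ⟨_, h2⟩
    rw [← h2] at h1
    exact sub_left_injective h1
  · intro p
    refine ⟨fun x => s (x - p) + p, by simp [hs0], fun x hx => ?_⟩
    obtain ⟨h1, h2, h3⟩ := hs (x - p) (sub_ne_zero.2 hx)
    simp only [add_sub_cancel_right]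
    refine ⟨⟨?_, ?_⟩, ?_⟩
    · intro h
      exact h1 (eq_sub_of_add_eq h.symm)
    · have e1 : s (s (x - p)) + p - x = s (s (x - p)) - (x - p) := by abel
      have e2 : s (x - p) + p - x = s (x - p) - (x - p) := by abel
      rw [e1, e2, h2]
    · rw [h3]; abel

theorem HasP.ofTab (n : ℕ) [NeZero n] (F S : List ℕ)
    (hf : ∀ d : Fin n, d ≠ 0 → Fin.ofNat n (F.getD d.1 0) ≠ 0 ∧
      Fin.ofNat n (F.getD (Fin.ofNat n (F.getD d.1 0)).1 0) = d ∧
      Fin.ofNat n (F.getD (-d).1 0) = Fin.ofNat n (F.getD d.1 0) - d)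
    (hs : Fin.ofNat n (S.getD (0 : Fin n).1 0) = 0 ∧ ∀ x : Fin n, x ≠ 0 →
      Fin.ofNat n (S.getD x.1 0) ≠ x ∧
      Fin.ofNat n (S.getD (Fin.ofNat n (S.getD x.1 0)).1 0) - x =
        Fin.ofNat n (F.getD (Fin.ofNat n (S.getD x.1 0) - x).1 0) ∧
      Fin.ofNat n (S.getD (Fin.ofNat n (S.getD (Fin.ofNat n (S.getD x.1 0)).1 0)).1 0) = x) :
    HasP (Fin n) :=
  HasP.ofGroup (fun d => Fin.ofNat n (F.getD d.1 0)) (fun x => Fin.ofNat n (S.getD x.1 0))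
    hf hs.1 hs.2

theorem base2 : HasP (Fin 13) :=
  HasP.ofTab 13
    [0, 10, 8, 4, 3, 7, 11, 5, 2, 12, 1, 6, 9]
    [0, 7, 5, 8, 9, 6, 2, 12, 10, 11, 3, 4, 1]
    (by decide +kernel) (by decide +kernel)

theorem base3 : HasP (Fin 19) :=
  HasP.ofTab 19
    [0, 12, 5, 17, 13, 2, 10, 8, 7, 15, 6, 18, 1, 4, 16, 9, 14, 3, 11]
    [0, 2, 13, 10, 8, 9, 12, 14, 17, 18, 11, 3, 16, 1, 15, 7, 6, 4, 5]
    (by decide +kernel) (by decide +kernel)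

theorem base4 : HasP (Fin 25) :=
  HasP.ofTab 25
    [0, 18, 6, 13, 23, 14, 2, 8, 7, 20, 22, 16, 15, 3, 5, 12, 11, 24, 1, 21, 9, 19, 10, 4,
      17]
    [0, 8, 12, 6, 15, 10, 16, 18, 9, 1, 19, 13, 24, 17, 21, 20, 3, 11, 23, 5, 4, 22, 14, 7,
      2]
    (by decide +kernel) (by decide +kernel)

theorem base5 : HasP (Fin 31) :=
  HasP.ofTab 31
    [0, 18, 8, 7, 28, 20, 29, 3, 2, 19, 22, 16, 21, 14, 13, 26, 11, 30, 1, 9, 5, 12, 10, 25,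
      27, 23, 15, 24, 4, 6, 17]
    [0, 7, 26, 6, 9, 15, 10, 30, 21, 24, 3, 14, 23, 16, 18, 27, 20, 19, 11, 25, 13, 22, 8,
      28, 4, 17, 29, 5, 12, 2, 1]
    (by decide +kernel) (by decide +kernel)

theorem base6 : HasP (Fin 37) :=
  HasP.ofTab 37
    [0, 22, 5, 35, 30, 2, 18, 11, 28, 17, 23, 7, 31, 27, 24, 16, 15, 9, 6, 25, 29, 36, 1, 10,
      14, 19, 33, 13, 8, 20, 4, 12, 34, 26, 32, 3, 21]
    [0, 11, 6, 17, 5, 26, 32, 9, 18, 12, 16, 24, 7, 23, 29, 21, 28, 27, 31, 34, 22, 33, 25,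
      36, 1, 20, 4, 3, 10, 30, 14, 8, 2, 15, 35, 19, 13]
    (by decide +kernel) (by decide +kernel)

theorem base7 : HasP (Fin 43) :=
  HasP.ofTab 43
    [0, 11, 24, 31, 17, 23, 14, 34, 37, 16, 42, 1, 15, 39, 6, 12, 9, 4, 38, 21, 25, 19, 41,
      5, 2, 20, 30, 36, 40, 35, 26, 3, 33, 32, 7, 29, 27, 8, 18, 13, 28, 22, 10]
    [0, 2, 12, 35, 33, 13, 7, 17, 27, 15, 11, 21, 1, 42, 20, 23, 22, 6, 24, 31, 28, 10, 30,
      9, 32, 37, 38, 29, 14, 8, 16, 34, 18, 39, 19, 36, 3, 40, 41, 4, 25, 26, 5]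
    (by decide +kernel) (by decide +kernel)

theorem base8 : HasP (Fin 49) :=
  HasP.ofTab 49
    [0, 8, 15, 35, 31, 29, 16, 48, 1, 28, 43, 23, 38, 47, 17, 2, 6, 14, 22, 40, 25, 30, 18,
      11, 44, 20, 37, 45, 9, 5, 21, 4, 46, 39, 36, 3, 34, 26, 12, 33, 19, 42, 41, 10, 24, 27,
      32, 13, 7]
    [0, 2, 9, 30, 22, 46, 40, 13, 14, 1, 12, 17, 25, 23, 24, 29, 18, 27, 31, 39, 21, 28, 26,
      7, 8, 10, 4, 11, 20, 32, 48, 16, 15, 34, 41, 36, 43, 38, 45, 44, 42, 33, 6, 35, 19, 37,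
      47, 5, 3]
    (by decide +kernel) (by decide +kernel)

theorem base10 : HasP (Fin 61) :=
  HasP.ofTab 61
    [0, 39, 8, 13, 40, 16, 59, 31, 2, 43, 58, 56, 44, 3, 42, 41, 5, 29, 27, 33, 35, 25, 23,
      22, 54, 21, 46, 18, 47, 17, 37, 7, 49, 19, 52, 20, 57, 30, 60, 1, 4, 15, 14, 9, 12, 50,
      26, 28, 51, 32, 45, 48, 34, 55, 24, 53, 11, 36, 10, 6, 38]
    [0, 18, 55, 24, 23, 58, 15, 16, 27, 26, 42, 25, 34, 20, 31, 49, 50, 47, 30, 22, 44, 39,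
      32, 37, 28, 53, 38, 41, 3, 51, 1, 43, 19, 36, 35, 12, 46, 4, 9, 48, 45, 8, 59, 14, 13,
      56, 33, 54, 21, 6, 7, 52, 29, 11, 17, 57, 40, 2, 60, 10, 5]
    (by decide +kernel) (by decide +kernel)

theorem base13 : HasP (Fin 79) :=
  HasP.ofTab 79
    [0, 18, 55, 16, 9, 75, 52, 47, 68, 4, 54, 19, 41, 76, 45, 37, 3, 78, 1, 11, 43, 49, 64,
      59, 26, 35, 24, 33, 58, 67, 51, 65, 39, 27, 48, 25, 56, 15, 50, 32, 72, 12, 57, 20, 69,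
      14, 73, 7, 34, 21, 38, 30, 6, 77, 10, 2, 36, 42, 28, 23, 71, 62, 61, 66, 22, 31, 63, 29,
      8, 44, 74, 60, 40, 46, 70, 5, 13, 53, 17]
    [0, 33, 44, 37, 28, 34, 7, 24, 14, 70, 41, 47, 50, 15, 60, 68, 20, 29, 32, 46, 25, 27,
      26, 43, 6, 16, 31, 73, 30, 58, 4, 22, 63, 40, 72, 55, 48, 51, 49, 54, 1, 75, 53, 66, 59,
      56, 52, 67, 77, 57, 62, 3, 19, 61, 76, 78, 64, 38, 17, 2, 8, 42, 12, 18, 45, 69, 23, 11,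
      13, 74, 71, 9, 5, 21, 65, 10, 39, 36, 35]
    (by decide +kernel) (by decide +kernel)

theorem base14 : HasP (Fin 85) :=
  HasP.ofTab 85
    [0, 44, 24, 73, 69, 52, 37, 75, 34, 62, 17, 25, 15, 40, 74, 12, 20, 10, 46, 49, 16, 50,
      83, 32, 2, 11, 77, 72, 67, 64, 66, 79, 23, 38, 8, 56, 55, 6, 33, 57, 13, 42, 41, 84, 1,
      58, 18, 80, 54, 19, 21, 59, 5, 76, 48, 36, 35, 39, 45, 51, 71, 63, 9, 61, 29, 81, 30,
      28, 78, 4, 82, 60, 27, 3, 14, 7, 53, 26, 68, 31, 47, 65, 70, 22, 43]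
    [0, 37, 25, 19, 65, 12, 66, 20, 21, 11, 18, 33, 80, 54, 35, 50, 46, 26, 44, 23, 47, 48,
      38, 3, 43, 34, 79, 29, 36, 51, 78, 52, 45, 9, 2, 64, 62, 56, 42, 40, 83, 57, 22, 73, 10,
      72, 82, 7, 8, 60, 71, 27, 81, 63, 55, 13, 1, 61, 68, 69, 74, 41, 28, 70, 14, 67, 77, 4,
      75, 76, 53, 15, 32, 24, 49, 58, 59, 6, 84, 17, 5, 31, 16, 39, 30]
    (by decide +kernel) (by decide +kernel)

theorem base16 : HasP (Fin 97) :=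
  HasP.ofTab 97
    [0, 22, 94, 5, 78, 3, 77, 16, 45, 90, 50, 67, 51, 48, 38, 33, 7, 53, 82, 23, 26, 96, 1,
      19, 83, 54, 20, 69, 55, 72, 41, 63, 66, 15, 65, 84, 80, 89, 14, 85, 87, 30, 70, 68, 61,
      8, 58, 57, 13, 62, 10, 12, 60, 17, 25, 28, 86, 47, 46, 73, 52, 44, 49, 31, 79, 34, 32,
      11, 43, 27, 42, 91, 29, 59, 93, 76, 75, 6, 4, 64, 36, 88, 18, 24, 35, 39, 56, 40, 81,
      37, 9, 71, 95, 74, 2, 92, 21]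
    [0, 35, 31, 52, 85, 34, 46, 54, 9, 30, 59, 18, 44, 24, 50, 42, 17, 38, 27, 48, 39, 53,
      81, 57, 80, 33, 45, 11, 71, 76, 8, 74, 51, 70, 77, 66, 37, 58, 16, 43, 41, 62, 84, 20,
      78, 49, 93, 67, 91, 26, 94, 55, 65, 87, 64, 32, 75, 88, 36, 72, 61, 82, 40, 83, 7, 3,
      1, 73, 69, 90, 25, 96, 10, 47, 2, 79, 86, 5, 12, 56, 13, 95, 60, 89, 15, 92, 29, 21, 23,
      63, 68, 19, 4, 6, 14, 22, 28]
    (by decide +kernel) (by decide +kernel)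

theorem base22 : HasP (Fin 133) :=
  HasP.ofTab 133
    [0, 92, 103, 29, 57, 48, 23, 58, 81, 37, 56, 99, 33, 68, 97, 89, 114, 127, 79, 35, 84,
      121, 108, 6, 62, 47, 130, 93, 124, 3, 32, 94, 30, 12, 45, 19, 50, 9, 109, 70, 67, 42,
      41, 128, 59, 34, 123, 25, 5, 69, 36, 126, 60, 129, 72, 120, 10, 4, 7, 44, 52, 115, 24,
      102, 113, 78, 106, 40, 13, 49, 39, 95, 54, 125, 118, 82, 80, 87, 65, 18, 76, 8, 75, 119,
      20, 90, 111, 77, 122, 15, 85, 132, 1, 27, 31, 71, 105, 14, 117, 11, 112, 131, 63, 2, 107,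
      96, 66, 104, 22, 38, 116, 86, 100, 64, 16, 61, 110, 98, 74, 83, 55, 21, 88, 46, 28, 73,
      51, 17, 43, 53, 26, 101, 91]
    [0, 28, 73, 68, 15, 33, 91, 53, 36, 48, 62, 13, 108, 114, 77, 103, 27, 22, 38, 25, 83,
      40, 65, 63, 95, 42, 45, 115, 94, 60, 106, 43, 59, 129, 46, 39, 132, 52, 102, 92, 56, 80,
      19, 64, 120, 61, 67, 54, 79, 98, 74, 75, 126, 130, 105, 85, 21, 82, 99, 125, 123, 26,
      70, 90, 31, 17, 72, 34, 81, 93, 10, 107, 89, 97, 112, 113, 88, 116, 84, 9, 111, 3, 104,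
      122, 101, 87, 127, 55, 109, 66, 23, 96, 35, 131, 1, 119, 6, 2, 118, 100, 58, 78, 18, 4,
      57, 47, 110, 121, 117, 76, 30, 41, 50, 51, 11, 16, 14, 12, 49, 24, 124, 71, 20, 29, 44,
      32, 37, 128, 86, 5, 7, 69, 8]
    (by decide +kernel) (by decide +kernel)

/-- block relation of a group divisible design with groups the fibres of a sigma type -/
structure GDDRel {I : Type*} {W : I → Type*} (T : (Σ i, W i) → (Σ i, W i) → (Σ i, W i) → Prop) :
    Prop where
  s1 : ∀ x y z, T x y z → T y x z
  s2 : ∀ x y z, T x y z → T x z y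
  ne : ∀ x y z, T x y z → x.1 ≠ y.1
  ex : ∀ x y, x.1 ≠ y.1 → ∃ z, T x y z
  un : ∀ x y z w, T x y z → T x y w → z = w

/-- embedding of an extended group -/
def inj {I : Type*} (W : I → Type*) (i : I) (y : Option (W i)) : Option (Σ i, W i) :=
  y.map (Sigma.mk i)

theorem inj_inj {I : Type*} (W : I → Type*) (i : I) (a b : Option (W i))
    (h : inj W i a = inj W i b) : a = b :=
  Option.map_injective sigma_mk_injective h

theorem inj_two {I : Type*} (W : I → Type*) (i j : I) (a b : Option (W i)) (c d : Option (W j))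
    (hab : a ≠ b) (h1 : inj W i a = inj W j c) (h2 : inj W i b = inj W j d) : i = j := by
  cases a with
  | none =>
    cases b with
    | none => exact absurd rfl hab
    | some b =>
      cases d with
      | none => simp [inj] at h2
      | some d => simp [inj] at h2; exact h2.1
  | some a =>
    cases c with
    | none => simp [inj] at h1
    | some c => simp [inj] at h1; exact h1.1

theorem HasP.fill {I : Type*} [Nonempty I] {W : I → Type*}
    (T : (Σ i, W i) → (Σ i, W i) → (Σ i, W i) → Prop) (hT : GDDRel T)
    (hW : ∀ i, HasP (Option (W i))) : HasP (Option (Σ i, W i)) := by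
  classical
  choose U hU hs using hW
  refine ⟨fun a b c => (∃ x y z, a = some x ∧ b = some y ∧ c = some z ∧ T x y z) ∨
    ∃ i x y z, a = inj W i x ∧ b = inj W i y ∧ c = inj W i z ∧ U i x y z,
    ⟨?_, ?_, ?_, ?_, ?_⟩, ?_⟩
  · rintro a b c (⟨x, y, z, h1, h2, h3, h⟩ | ⟨i, x, y, z, h1, h2, h3, h⟩)
    · exact Or.inl ⟨y, x, z, h2, h1, h3, hT.s1 _ _ _ h⟩
    · exact Or.inr ⟨i, y, x, z, h2, h1, h3, (hU i).s1 _ _ _ h⟩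
  · rintro a b c (⟨x, y, z, h1, h2, h3, h⟩ | ⟨i, x, y, z, h1, h2, h3, h⟩)
    · exact Or.inl ⟨x, z, y, h1, h3, h2, hT.s2 _ _ _ h⟩
    · exact Or.inr ⟨i, x, z, y, h1, h3, h2, (hU i).s2 _ _ _ h⟩
  · rintro a b c (⟨x, y, z, rfl, rfl, rfl, h⟩ | ⟨i, x, y, z, rfl, rfl, rfl, h⟩)
    · intro e
      exact hT.ne _ _ _ h (by rw [Option.some.inj e])
    · intro e
      exact (hU i).ne _ _ _ h (inj_inj W i _ _ e)
  · have key : ∀ i (x y : Option (W i)), inj W i x ≠ inj W i y → ∃ z,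
        (∃ x' y' z', inj W i x = some x' ∧ inj W i y = some y' ∧ z = some z' ∧ T x' y' z') ∨
        ∃ j x' y' z', inj W i x = inj W j x' ∧ inj W i y = inj W j y' ∧ z = inj W j z' ∧
          U j x' y' z' := by
      intro i x y h
      obtain ⟨z, hz⟩ := (hU i).ex x y (fun e => h (by rw [e]))
      exact ⟨inj W i z, Or.inr ⟨i, x, y, z, rfl, rfl, rfl, hz⟩⟩
    intro a b hab
    rcases a with _ | ⟨i, x⟩
    · rcases b with _ | ⟨j, y⟩
      · exact absurd rfl hab
      · exact key j none (some y) hab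
    · rcases b with _ | ⟨j, y⟩
      · exact key i (some x) none hab
      · by_cases hij : i = j
        · subst hij
          exact key i (some x) (some y) hab
        · obtain ⟨z, hz⟩ := hT.ex ⟨i, x⟩ ⟨j, y⟩ hij
          exact ⟨some z, Or.inl ⟨_, _, _, rfl, rfl, rfl, hz⟩⟩
  · have mix : ∀ x y z i x' y' z', T x y z → some x = inj W i x' → some y = inj W i y' →
        U i x' y' z' → False := by
      intro x y z i x' y' z' h h1 h2 _
      rcases x' with _ | x'
      · simp [inj] at h1
      rcases y' with _ | y'
      · simp [inj] at h2
      simp [inj] at h1 h2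
      exact hT.ne _ _ _ h (by rw [h1, h2])
    rintro a b c d (⟨x, y, z, rfl, rfl, rfl, h⟩ | ⟨i, x, y, z, rfl, rfl, rfl, h⟩)
      (⟨x', y', z', h1, h2, rfl, h'⟩ | ⟨i', x', y', z', h1, h2, rfl, h'⟩)
    · cases Option.some.inj h1
      cases Option.some.inj h2
      rw [hT.un _ _ _ _ h h']
    · exact (mix _ _ _ _ _ _ _ h h1 h2 h').elim
    · exact (mix _ _ _ _ _ _ _ h' h1.symm h2.symm h).elim
    · have := inj_two W i i' x y x' y' ((hU i).ne _ _ _ h) h1 h2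
      subst this
      cases inj_inj W i _ _ h1
      cases inj_inj W i _ _ h2
      rw [(hU i).un _ _ _ _ h h']
  · intro p
    obtain ⟨i0, p0, hp⟩ : ∃ i0 p0, inj W i0 p0 = p := by
      rcases p with _ | ⟨i, x⟩
      · exact ⟨Classical.arbitrary I, none, rfl⟩
      · exact ⟨i, some x, rfl⟩
    have hτ : ∀ i, ∃ (q : Option (W i)) (s : Option (W i) → Option (W i)), s q = q ∧
        (∀ x, x ≠ q → U i x (s x) (s (s x)) ∧ s (s (s x)) = x) ∧
        (inj W i q = p ∧ i = i0 ∨ i ≠ i0 ∧ q = none) := by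
      intro i
      by_cases hi : i = i0
      · subst hi
        obtain ⟨s, h1, h2⟩ := hs i p0
        exact ⟨p0, s, h1, h2, Or.inl ⟨hp, rfl⟩⟩
      · obtain ⟨s, h1, h2⟩ := hs i none
        exact ⟨none, s, h1, h2, Or.inr ⟨hi, rfl⟩⟩
    choose q τ hq hτ hqp using hτ
    let σ : Option (Σ i, W i) → Option (Σ i, W i) := fun a =>
      match a with
      | none => inj W i0 (τ i0 none)
      | some ⟨i, x⟩ => inj W i (τ i (some x))
    have hσ : ∀ i y, (i = i0 ∨ y ≠ none) → σ (inj W i y) = inj W i (τ i y) := by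
      intro i y h
      rcases y with _ | y
      · rcases h with rfl | h
        · rfl
        · exact absurd rfl h
      · rfl
    have hne : ∀ i x, x ≠ q i → τ i x ≠ q i := by
      intro i x hx e
      have h1 := (hτ i x hx).1
      rw [e, hq] at h1
      exact (hU i).ne _ _ _ ((hU i).s1 _ _ _ ((hU i).s2 _ _ _ ((hU i).s1 _ _ _ h1))) rfl |>.elim
    have main : ∀ i y, inj W i y ≠ p → (i = i0 ∨ y ≠ none) → y ≠ q i ∧ (i = i0 ∨ τ i y ≠ none) := by
      intro i y hy h
      rcases hqp i with ⟨h1, h2⟩ | ⟨h1, h2⟩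
      · exact ⟨fun e => hy (by rw [e, h1]), Or.inl h2⟩
      · have : y ≠ q i := by
          rw [h2]; exact h.resolve_left h1
        exact ⟨this, Or.inr (by have := hne i y this; rwa [h2] at this)⟩
    have main2 : ∀ i y, inj W i y ≠ p → (i = i0 ∨ y ≠ none) →
        (∃ j x y' z, inj W i y = inj W j x ∧ σ (inj W i y) = inj W j y' ∧
          σ (σ (inj W i y)) = inj W j z ∧ U j x y' z) ∧ σ (σ (σ (inj W i y))) = inj W i y := by
      intro i y hy h
      obtain ⟨h1, h2⟩ := main i y hy h
      have h3 : i = i0 ∨ τ i (τ i y) ≠ none := by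
        rcases hqp i with ⟨_, h5⟩ | ⟨_, h5⟩
        · exact Or.inl h5
        · have := hne i _ (hne i y h1)
          rw [h5] at this
          exact Or.inr this
      rw [hσ i y h, hσ i _ h2, hσ i _ h3, (hτ i y h1).2]
      exact ⟨⟨i, _, _, _, rfl, rfl, rfl, (hτ i y h1).1⟩, rfl⟩
    refine ⟨σ, ?_, ?_⟩
    · have h0 : inj W i0 (q i0) = p := by
        rcases hqp i0 with h | h
        · exact h.1
        · exact absurd rfl h.1
      rw [← h0, hσ _ _ (Or.inl rfl), hq]
    · intro x hx
      rcases x with _ | ⟨i, x⟩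
      · have := main2 i0 none hx (Or.inl rfl)
        exact ⟨Or.inr this.1, this.2⟩
      · have := main2 i (some x) hx (Or.inr (by simp))
        exact ⟨Or.inr this.1, this.2⟩

/-- points of the affine plane of order three, without the origin -/
def vec (j : Fin 4) (e : Bool) : ZMod 3 × ZMod 3 :=
  let v : ZMod 3 × ZMod 3 := if j = 0 then (1, 0) else if j = 1 then (0, 1) else
    if j = 2 then (1, 1) else (1, 2)
  if e then v else -v

/-- the ingredient designs of types `2^4` and `2^3` -/
def CC (b : Bool) (j : Fin 4) (e : Bool) (k : Fin 4) (f : Bool) (l : Fin 4) (g : Bool) : Prop :=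
  (j ≠ k ∧ k ≠ l ∧ j ≠ l) ∧
  (b = true ∧ vec j e + vec k f + vec l g = 0 ∨
   b = false ∧ j ≠ 3 ∧ k ≠ 3 ∧ l ≠ 3 ∧ (xor e (xor f g)) = false)

instance (b : Bool) (j : Fin 4) (e : Bool) (k : Fin 4) (f : Bool) (l : Fin 4) (g : Bool) :
    Decidable (CC b j e k f l g) := by unfold CC; infer_instance

theorem CC_s1 : ∀ b j e k f l g, CC b j e k f l g → CC b k f j e l g := by decide +kernel
theorem CC_s2 : ∀ b j e k f l g, CC b j e k f l g → CC b j e l g k f := by decide +kernel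
theorem CC_ex : ∀ b j e k f, j ≠ k → (b = true ∨ j ≠ 3 ∧ k ≠ 3) → ∃ l g, CC b j e k f l g := by
  decide +kernel
theorem CC_un : ∀ b j e k f l g l' g', CC b j e k f l g → CC b j e k f l' g' → l = l' ∧ g = g' := by
  decide +kernel
theorem CC_three : ∀ b j e k f l g, CC b j e k f l g → l = 3 → b = true := by decide +kernel

/-- lines of the transversal design -/
def lpt {m : ℕ} (u v : ZMod m) (j : Fin 4) : ZMod m :=
  if j = 0 then u else if j = 1 then v else if j = 2 then u + v else u - v

theorem lpt_ex {m : ℕ} (c : ZMod m) (hc : 2 * c = 1) (j k : Fin 4) (h : j ≠ k) (x y : ZMod m) :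
    ∃ u v, lpt u v j = x ∧ lpt u v k = y := by
  have H : ∀ j k : Fin 4, j < k → ∀ x y : ZMod m, ∃ u v, lpt u v j = x ∧ lpt u v k = y := by
    intro j k h x y
    fin_cases j <;> fin_cases k <;> first | (exact absurd h (by decide)) | skip
    · exact ⟨x, y, by simp [lpt], by simp [lpt]⟩
    · exact ⟨x, y - x, by simp [lpt], by simp [lpt]⟩
    · exact ⟨x, x - y, by simp [lpt], by simp [lpt]⟩
    · exact ⟨y - x, x, by simp [lpt], by simp [lpt]⟩
    · exact ⟨y + x, x, by simp [lpt], by simp [lpt]⟩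
    · refine ⟨c * (x + y), c * (x - y), ?_, ?_⟩
      · simp [lpt]; linear_combination x * hc
      · simp [lpt]; linear_combination y * hc
  rcases lt_or_gt_of_ne h with h | h
  · exact H j k h x y
  · obtain ⟨u, v, h1, h2⟩ := H k j h y x
    exact ⟨u, v, h2, h1⟩

theorem lpt_un {m : ℕ} (c : ZMod m) (hc : 2 * c = 1) (j k : Fin 4) (h : j ≠ k) (u v u' v' : ZMod m)
    (h1 : lpt u v j = lpt u' v' j) (h2 : lpt u v k = lpt u' v' k) : u = u' ∧ v = v' := by
  have H : ∀ j k : Fin 4, j < k → lpt u v j = lpt u' v' j → lpt u v k = lpt u' v' k →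
      u = u' ∧ v = v' := by
    intro j k h h1 h2
    fin_cases j <;> fin_cases k <;> first | (exact absurd h (by decide)) | skip
    all_goals simp [lpt] at h1 h2
    · exact ⟨h1, h2⟩
    · exact ⟨h1, by linear_combination h2 - h1⟩
    · exact ⟨h1, by linear_combination h1 - h2⟩
    · exact ⟨by linear_combination h2 - h1, h1⟩
    · exact ⟨by linear_combination h2 + h1, h1⟩
    · exact ⟨by linear_combination c * (h1 + h2) - (u - u') * hc,
        by linear_combination c * (h1 - h2) - (v - v') * hc⟩
  rcases lt_or_gt_of_ne h with h | h
  · exact H j k h h1 h2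
  · exact H k j h h2 h1

/-- groups of the design -/
abbrev WW (m h : ℕ) (j : Fin 4) : Type :=
  {x : ZMod m // j = 3 → x.val < h} × (Bool × ZMod 3)

/-- blocks of the design -/
def TT (m h : ℕ) (p q r : Σ j, WW m h j) : Prop :=
  ∃ u v : ZMod m, lpt u v p.1 = p.2.1.1 ∧ lpt u v q.1 = q.2.1.1 ∧ lpt u v r.1 = r.2.1.1 ∧
    CC (decide ((u - v).val < h)) p.1 p.2.2.1 q.1 q.2.2.1 r.1 r.2.2.1 ∧
    p.2.2.2 + q.2.2.2 + r.2.2.2 = 0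

theorem TT_gdd (m h : ℕ) (c : ZMod m) (hc : 2 * c = 1) : GDDRel (TT m h) := by
  refine ⟨?_, ?_, ?_, ?_, ?_⟩
  · rintro p q r ⟨u, v, h1, h2, h3, h4, h5⟩
    exact ⟨u, v, h2, h1, h3, CC_s1 _ _ _ _ _ _ _ h4, by rw [← h5]; ring⟩
  · rintro p q r ⟨u, v, h1, h2, h3, h4, h5⟩
    exact ⟨u, v, h1, h3, h2, CC_s2 _ _ _ _ _ _ _ h4, by rw [← h5]; ring⟩
  · rintro p q r ⟨u, v, h1, h2, h3, h4, h5⟩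
    exact h4.1.1
  · rintro ⟨j, ⟨x, hx⟩, e, a⟩ ⟨k, ⟨y, hy⟩, f, b⟩ hjk
    obtain ⟨u, v, h1, h2⟩ := lpt_ex c hc j k hjk x y
    obtain ⟨l, g, hC⟩ := CC_ex (decide ((u - v).val < h)) j e k f hjk (by
      by_cases hh : (u - v).val < h
      · left; simpa using hh
      · right
        refine ⟨?_, ?_⟩
        · rintro rfl
          apply hh
          have := hx rfl
          rw [← h1] at this
          simpa [lpt] using this
        · rintro rfl
          apply hh
          have := hy rfl
          rw [← h2] at this
          simpa [lpt] using this)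
    refine ⟨⟨l, ⟨lpt u v l, ?_⟩, g, -a - b⟩, u, v, h1, h2, rfl, hC, ?_⟩
    · intro hl
      have := CC_three _ _ _ _ _ _ _ hC hl
      subst hl
      simpa [lpt] using this
    · show a + b + (-a - b) = 0
      ring
  · rintro ⟨j, ⟨x, hx⟩, e, a⟩ ⟨k, ⟨y, hy⟩, f, b⟩ ⟨l, ⟨z, hz⟩, g, d⟩ ⟨l', ⟨z', hz'⟩, g', d'⟩
      ⟨u, v, h1, h2, h3, h4, h5⟩ ⟨u', v', h1', h2', h3', h4', h5'⟩
    dsimp only at *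
    obtain ⟨rfl, rfl⟩ := lpt_un c hc j k h4.1.1 u v u' v' (h1.trans h1'.symm) (h2.trans h2'.symm)
    obtain ⟨rfl, rfl⟩ := CC_un _ _ _ _ _ _ _ _ _ h4 h4'
    have e1 : z = z' := h3.symm.trans h3'
    have e2 : d = d' := by linear_combination h5 - h5'
    subst e1 e2
    rfl

theorem HasP.ofCard {X : Type*} [Fintype X] (n : ℕ) (hX : Fintype.card X = n) (h : HasP (Fin n)) :
    HasP X :=
  h.congr (Fintype.equivFinOfCardEq hX).symm

theorem card_low (m h : ℕ) [NeZero m] (hh : h ≤ m) :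
    Fintype.card {x : ZMod m // x.val < h} = h := by
  rw [Fintype.card_eq_nat_card]
  have : {x : ZMod m // x.val < h} ≃ Fin h :=
    { toFun := fun x => ⟨x.1.val, x.2⟩
      invFun := fun i => ⟨(i.1 : ZMod m), by
        rw [ZMod.val_natCast, Nat.mod_eq_of_lt (by omega)]; exact i.2⟩
      left_inv := fun x => by ext; simp
      right_inv := fun i => by
        ext
        simp only [ZMod.val_natCast]
        exact Nat.mod_eq_of_lt (by omega) }
  rw [Nat.card_congr this]; simp

theorem card_WW3 (m h : ℕ) [NeZero m] (hh : h ≤ m) : Fintype.card (WW m h 3) = 6 * h := by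
  have : Fintype.card {x : ZMod m // (3 : Fin 4) = 3 → x.val < h} = h := by
    refine Eq.trans (Fintype.card_congr ?_) (card_low m h hh)
    exact Equiv.subtypeEquivRight (by simp)
  rw [Fintype.card_prod, this]
  simp [ZMod.card]; ring

theorem card_WW (m h : ℕ) [NeZero m] (j : Fin 4) (hj : j ≠ 3) :
    Fintype.card (WW m h j) = 6 * m := by
  have : Fintype.card {x : ZMod m // j = 3 → x.val < h} = m := by
    conv_rhs => rw [← ZMod.card m]
    apply Fintype.card_congr
    exact Equiv.subtypeUnivEquiv (by simp [hj])
  rw [Fintype.card_prod, this]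
  simp [ZMod.card]; ring

theorem HasP.step (m h : ℕ) (hm : m % 2 = 1) (hh : h ≤ m) (h1 : HasP (Fin (6 * m + 1)))
    (h2 : HasP (Fin (6 * h + 1))) : HasP (Fin (6 * (3 * m + h) + 1)) := by
  have : NeZero m := ⟨by omega⟩
  have hc : (2 : ZMod m) * (((m + 1) / 2 : ℕ) : ZMod m) = 1 := by
    have : ((2 * ((m + 1) / 2) : ℕ) : ZMod m) = ((m + 1 : ℕ) : ZMod m) := by
      congr 1; omega
    push_cast at this
    rw [this]; simp
  have key : HasP (Option (Σ j, WW m h j)) := by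
    apply HasP.fill (TT m h) (TT_gdd m h _ hc)
    intro j
    by_cases hj : j = 3
    · subst hj
      exact HasP.ofCard _ (by rw [Fintype.card_option, card_WW3 m h hh]) h2
    · exact HasP.ofCard _ (by rw [Fintype.card_option, card_WW m h j hj]) h1
  refine key.congr (Fintype.equivFinOfCardEq ?_)
  rw [Fintype.card_option, Fintype.card_sigma, Fin.sum_univ_four, card_WW3 m h hh,
    card_WW m h 0 (by decide), card_WW m h 1 (by decide), card_WW m h 2 (by decide)]
  ring

theorem base0 : HasP (Fin 1) :=
  ⟨fun _ _ _ => False, ⟨by simp, by simp, by simp, fun x y h => absurd (Subsingleton.elim x y) h,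
    by simp⟩, fun p => ⟨id, rfl, fun x h => absurd (Subsingleton.elim x p) h⟩⟩

theorem hasP_all (t : ℕ) (ht : t ≠ 1) : HasP (Fin (6 * t + 1)) := by
  induction t using Nat.strong_induction_on with
  | _ t ih =>
    have st : ∀ m h, t = 3 * m + h → m % 2 = 1 → h ≤ m → m ≠ 1 → h ≠ 1 →
        HasP (Fin (6 * t + 1)) := by
      intro m h e h1 h2 h3 h4
      subst e
      exact HasP.step m h h1 h2 (ih m (by omega) h3) (ih h (by omega) h4)
    by_cases hb : t < 23
    · interval_cases t
      · exact base0
      · exact absurd rfl ht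
      · exact base2
      · exact base3
      · exact base4
      · exact base5
      · exact base6
      · exact base7
      · exact base8
      · exact st 3 0 rfl rfl (by omega) (by omega) (by omega)
      · exact base10
      · exact st 3 2 rfl rfl (by omega) (by omega) (by omega)
      · exact st 3 3 rfl rfl (by omega) (by omega) (by omega)
      · exact base13
      · exact base14
      · exact st 5 0 rfl rfl (by omega) (by omega) (by omega)
      · exact base16
      · exact st 5 2 rfl rfl (by omega) (by omega) (by omega)
      · exact st 5 3 rfl rfl (by omega) (by omega) (by omega)
      · exact st 5 4 rfl rfl (by omega) (by omega) (by omega)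
      · exact st 5 5 rfl rfl (by omega) (by omega) (by omega)
      · exact st 7 0 rfl rfl (by omega) (by omega) (by omega)
      · exact base22
    · exact st (2 * ((t - 5) / 6) + 1) ((t - 5) % 6 + 2) (by omega) (by omega) (by omega)
        (by omega) (by omega)

theorem stmt14 (n : ℕ) (hpos : 0 < n) (hmod : n % 6 = 1) (hne : n ≠ 7) :
    ∃ B : Finset (Finset (Fin n)), isSTS B ∧
      ∀ x : Fin n, ∃ A : Finset (Finset (Fin n)),
        isAPC B A ∧ x ∉ A.biUnion id := by
  classical
  obtain ⟨t, rfl⟩ : ∃ t, n = 6 * t + 1 := ⟨n / 6, by omega⟩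
  obtain ⟨T, hT, hs⟩ := hasP_all t (by omega)
  have ne2 : ∀ x y z, T x y z → x ≠ z := fun x y z h => hT.ne _ _ _ (hT.s2 _ _ _ h)
  have ne3 : ∀ x y z, T x y z → y ≠ z := fun x y z h => ne2 _ _ _ (hT.s1 _ _ _ h)
  -- a block through two of its points
  have two : ∀ x y z p q, T x y z → p ∈ ({x, y, z} : Finset (Fin (6 * t + 1))) →
      q ∈ ({x, y, z} : Finset (Fin (6 * t + 1))) → p ≠ q →
      ∃ r, T p q r ∧ ({x, y, z} : Finset (Fin (6 * t + 1))) = {p, q, r} := by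
    intro x y z p q h hp hq hpq
    have a1 := hT.s1 _ _ _ h
    have a2 := hT.s2 _ _ _ h
    have a3 := hT.s2 _ _ _ a1
    have a4 := hT.s1 _ _ _ a2
    have a5 := hT.s1 _ _ _ a3
    simp only [Finset.mem_insert, Finset.mem_singleton] at hp hq
    rcases hp with rfl | rfl | rfl <;> rcases hq with rfl | rfl | rfl <;>
      first
      | exact absurd rfl hpq
      | (refine ⟨_, by assumption, ?_⟩; ext w; simp only [Finset.mem_insert, Finset.mem_singleton]; try tauto)
  let B : Finset (Finset (Fin (6 * t + 1))) :=
    Finset.univ.filter (fun b => ∃ x y z, T x y z ∧ b = {x, y, z})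
  have hB : ∀ b, b ∈ B ↔ ∃ x y z, T x y z ∧ b = {x, y, z} := by
    intro b; simp [B]
  refine ⟨B, ⟨?_, ?_⟩, ?_⟩
  · intro b hb
    obtain ⟨x, y, z, h, rfl⟩ := (hB b).1 hb
    exact Finset.card_eq_three.2 ⟨x, y, z, hT.ne _ _ _ h, ne2 _ _ _ h, ne3 _ _ _ h, rfl⟩
  · intro p q hpq
    obtain ⟨r, hr⟩ := hT.ex p q hpq
    rw [Finset.card_eq_one]
    refine ⟨{p, q, r}, ?_⟩
    ext b
    simp only [Finset.mem_filter, Finset.mem_singleton, hB]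
    constructor
    · rintro ⟨⟨x, y, z, h, rfl⟩, hp, hq⟩
      obtain ⟨r', h1, h2⟩ := two x y z p q h hp hq hpq
      rw [h2, hT.un _ _ _ _ hr h1]
    · rintro rfl
      exact ⟨⟨p, q, r, hr, rfl⟩, by simp, by simp⟩
  · intro p
    obtain ⟨s, hp, hx⟩ := hs p
    have hne : ∀ x, x ≠ p → s x ≠ p := by
      intro x h e
      have h1 := (hx x h).2
      rw [e, hp, hp] at h1
      exact h h1.symm
    let A : Finset (Finset (Fin (6 * t + 1))) :=
      (Finset.univ.erase p).image (fun x => {x, s x, s (s x)})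
    have hA : ∀ b, b ∈ A ↔ ∃ x, x ≠ p ∧ ({x, s x, s (s x)} : Finset _) = b := by
      intro b; simp [A]
    have hU : A.biUnion id = Finset.univ.erase p := by
      ext w
      simp only [Finset.mem_biUnion, hA, id, Finset.mem_erase, Finset.mem_univ, and_true]
      constructor
      · rintro ⟨_, ⟨x, h, rfl⟩, hw⟩
        simp only [Finset.mem_insert, Finset.mem_singleton] at hw
        rcases hw with rfl | rfl | rfl
        · exact h
        · exact hne _ h
        · exact hne _ (hne _ h)
      · intro h
        exact ⟨_, ⟨w, h, rfl⟩, by simp⟩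
    have rot : ∀ x w, x ≠ p → w ∈ ({x, s x, s (s x)} : Finset (Fin (6 * t + 1))) →
        ({x, s x, s (s x)} : Finset (Fin (6 * t + 1))) = {w, s w, s (s w)} := by
      intro x w h hw
      have h3 := (hx x h).2
      simp only [Finset.mem_insert, Finset.mem_singleton] at hw
      rcases hw with rfl | rfl | rfl
      · rfl
      · rw [h3]; ext w; simp only [Finset.mem_insert, Finset.mem_singleton]; tauto
      · rw [h3]; ext w; simp only [Finset.mem_insert, Finset.mem_singleton]; tauto
    refine ⟨A, ⟨?_, ?_, p, hU⟩, ?_⟩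
    · intro b hb
      obtain ⟨x, h, rfl⟩ := (hA b).1 hb
      exact (hB _).2 ⟨_, _, _, (hx x h).1, rfl⟩
    · intro b1 h1 b2 h2 hne12
      obtain ⟨x, h, rfl⟩ := (hA b1).1 h1
      obtain ⟨y, h', rfl⟩ := (hA b2).1 h2
      rw [Finset.disjoint_left]
      intro w hw hw'
      exact hne12 ((rot x w h hw).trans (rot y w h' hw').symm)
    · rw [hU]; simp
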